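/- arXiv:2206.01177 — 5 statements merged into one kernel-verified Lean document; each statement's English description precedes it below -/
import Mathlib

section
/- Let T be a measure-preserving transformation of a probability space (X, ℬ, μ) and let M ⊆ ℕ be an infinite syndetic set. If T is mixing on M, then T is strongly mixing. -/
open MeasureTheory Filter Set

/-- A measure-preserving transformation `T` is mixing on a set `M ⊆ ℕ` if
`μ(T^{-m} A ∩ B) → μ(A)μ(B)` as `m → ∞` along `m ∈ M`. -/
def MixingOnMap {X : Type*} [MeasurableSpace X] (μ : Measure X) (T : X → X)
    (M : Set ℕ) : Prop :=
  ∀ A B : Set X, MeasurableSet A → MeasurableSet B →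
    Tendsto (fun m : ℕ => μ (T^[m] ⁻¹' A ∩ B)) (atTop ⊓ 𝓟 M) (nhds (μ A * μ B))

/-- `M ⊆ ℕ` is syndetic: gaps between consecutive elements are bounded, i.e. every
interval of `d` consecutive naturals meets `M` for some fixed `d > 0`. -/
def SyndeticNat (M : Set ℕ) : Prop :=
  ∃ d : ℕ, 0 < d ∧ ∀ n : ℕ, ∃ m ∈ M, n ≤ m ∧ m < n + d

/-- If a measure-preserving transformation of a probability space is mixing
on an infinite syndetic set, then it is strongly mixing. -/
theorem strongMixing_of_mixingOn_syndetic {X : Type*} [MeasurableSpace X]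
    (μ : Measure X) [IsProbabilityMeasure μ] (T : X → X)
    (hT : MeasurePreserving T μ μ) (M : Set ℕ) (hMinf : M.Infinite)
    (hMsyn : SyndeticNat M) (hmix : MixingOnMap μ T M) :
    MixingOnMap μ T Set.univ := by
  obtain ⟨d, -, hd⟩ := hMsyn
  intro A B hA hB
  rw [principal_univ, inf_top_eq, tendsto_def]
  intro U hU
  have key : ∀ k ∈ Set.Iio d, ∀ᶠ m in atTop ⊓ 𝓟 M, μ (T^[m] ⁻¹' A ∩ T^[k] ⁻¹' B) ∈ U := by
    intro k _
    have hk := hT.iterate k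
    have h := hmix A (T^[k] ⁻¹' B) hA (hk.measurable hB)
    rw [hk.measure_preimage hB.nullMeasurableSet] at h
    exact h hU
  have key2 := (eventually_all_finite (Set.finite_Iio d)).2 key
  rw [eventually_inf_principal, eventually_atTop] at key2
  obtain ⟨N, hN⟩ := key2
  refine mem_atTop_sets.2 ⟨N, fun n hn => ?_⟩
  obtain ⟨m, hmM, hnm, hmd⟩ := hd n
  obtain ⟨k, rfl⟩ := Nat.exists_eq_add_of_le hnm
  have h := hN (n + k) (by omega) hmM k (by simp only [Set.mem_Iio]; omega)
  have hset : T^[n + k] ⁻¹' A ∩ T^[k] ⁻¹' B = T^[k] ⁻¹' (T^[n] ⁻¹' A ∩ B) := by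
    rw [Function.iterate_add, Set.preimage_comp, Set.preimage_inter]
  rw [hset, (hT.iterate k).measure_preimage
    (((hT.iterate n).measurable hA).inter hB).nullMeasurableSet] at h
  exact h
end

section
/- For each positive integer n, there exists an n-thick subset of ℕ that is not (n+1)-thick. -/
open Set

/-- `K ⊆ ℕ` is `r`-thick: for each `ℓ` there is `k` with
`{j⬝k + i : 1 ≤ j ≤ r, -ℓ ≤ i ≤ ℓ} ⊆ K`. -/
def RThickNat (r : ℕ) (K : Set ℕ) : Prop :=
  ∀ ℓ : ℕ, ∃ k : ℕ, ∀ j : ℕ, 1 ≤ j → j ≤ r → ∀ i : ℤ, -(ℓ : ℤ) ≤ i → i ≤ (ℓ : ℤ) →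
    ∃ m : ℕ, (m : ℤ) = (j : ℤ) * (k : ℤ) + i ∧ m ∈ K

/-- for every positive integer `n` there is an `n`-thick subset of `ℕ`
that is not `(n+1)`-thick. -/
theorem exists_rThick_not_succ_rThick (n : ℕ) (hn : 1 ≤ n) :
    ∃ K : Set ℕ, RThickNat n K ∧ ¬ RThickNat (n + 1) K := by
  obtain ⟨C, hC⟩ : ∃ C : ℕ, C = 2 * (n + 2) ^ 2 := ⟨_, rfl⟩
  have hC2 : 2 ≤ C := by rw [hC]; nlinarith
  obtain ⟨a, ha1, ha2, ha3⟩ : ∃ a : ℕ → ℕ, (∀ t, C * (t + 1) ≤ a t) ∧ Monotone a ∧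
      ∀ t s, t < s → C * a t ≤ a s := by
    refine ⟨fun t => C ^ (t + 1), fun t => ?_, fun s t h => ?_, fun t s h => ?_⟩
    · have h : t + 1 ≤ C ^ t := Nat.lt_pow_self (by omega)
      calc C * (t + 1) ≤ C * C ^ t := Nat.mul_le_mul_left _ h
        _ = C ^ (t + 1) := by ring
    · exact Nat.pow_le_pow_right (by omega) (by omega)
    · calc C * C ^ (t + 1) = C ^ (t + 1 + 1) := by ring
        _ ≤ C ^ (s + 1) := Nat.pow_le_pow_right (by omega) (by omega)
  refine ⟨{m | ∃ t j : ℕ, 1 ≤ j ∧ j ≤ n ∧ j * a t ≤ m + t ∧ m ≤ j * a t + t}, ?_, ?_⟩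
  · intro l
    refine ⟨a l, fun j h1 h2 i hi1 hi2 => ?_⟩
    have h3 := ha1 l
    have h4 : l ≤ j * a l := by nlinarith
    have h5 : (l : ℤ) ≤ (j : ℤ) * (a l : ℤ) := by exact_mod_cast h4
    refine ⟨((j : ℤ) * (a l : ℤ) + i).toNat, by omega, l, j, h1, h2, ?_, ?_⟩
    · zify; omega
    · zify; omega
  · intro h
    obtain ⟨k, hk⟩ := h 0
    obtain ⟨m, hm, t, j, hj1, hj2, h1, h2⟩ := hk 1 le_rfl (by omega) 0 (by simp) (by simp)
    obtain ⟨m', hm', s, i, hi1, hi2, h3, h4⟩ := hk (n + 1) (by omega) le_rfl 0 (by simp) (by simp)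
    have e1 : m = k := by push_cast at hm; omega
    have e2 : m' = (n + 1) * k := by zify; push_cast at hm'; linarith
    subst e1 e2
    have b1 : a t ≤ m + t := by nlinarith
    have b2 : m ≤ n * a t + t := h2.trans (by gcongr)
    have b3 : a s ≤ (n + 1) * m + s := by nlinarith
    have b4 : (n + 1) * m ≤ n * a s + s := h4.trans (by gcongr)
    have c1 := ha1 t
    have c2 := ha1 s
    rcases le_or_gt s t with hst | hst
    · have d1 : n * a s ≤ n * a t := Nat.mul_le_mul_left _ (ha2 hst)
      have d2 : (n + 1) * a t ≤ (n + 1) * (m + t) := Nat.mul_le_mul_left _ b1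
      have d3 : (n + 2) * (t + 1) ≤ C * (t + 1) := Nat.mul_le_mul_right _ (by rw [hC]; nlinarith)
      nlinarith
    · have d1 := ha3 t s hst
      have d2 : 2 * (s + 1) ≤ C * (s + 1) := Nat.mul_le_mul_right _ hC2
      have d3 : t ≤ a t := by nlinarith
      have d4 : m ≤ (n + 1) * a t := by linarith
      have d5 : (n + 1) * m ≤ (n + 1) * ((n + 1) * a t) := Nat.mul_le_mul_left _ d4
      have d6 : a s + 2 ≤ 2 * ((n + 1) * m) := by omega
      have d7 : 2 * ((n + 1) * ((n + 1) * a t)) ≤ C * a t := by rw [hC]; nlinarith [Nat.zero_le (n * a t)]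
      linarith
end

section
/- For each positive integer r, the set K = ⋃_{n=1}^{∞} ([(r+1)^{(r+1)n}, (r+1)^{(r+1)n+1} − 1] ∩ ℕ) is r-thick and has the property that if k ∈ K then (r+1)k ∉ K. In particular, for r = 1, the set K = ⋃_{n=1}^{∞} ([2^{2n}, 2^{2n+1} − 1] ∩ ℕ) is thick and satisfies: k ∈ K implies 2k ∉ K. -/
open Set

theorem aux_main (r : ℕ) (hr : 1 ≤ r) :
      RThickNat r {m : ℕ | ∃ n : ℕ, 1 ≤ n ∧
          (r + 1) ^ ((r + 1) * n) ≤ m ∧ m ≤ (r + 1) ^ ((r + 1) * n + 1) - 1} ∧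
      ∀ k ∈ {m : ℕ | ∃ n : ℕ, 1 ≤ n ∧
          (r + 1) ^ ((r + 1) * n) ≤ m ∧ m ≤ (r + 1) ^ ((r + 1) * n + 1) - 1},
        (r + 1) * k ∉ {m : ℕ | ∃ n : ℕ, 1 ≤ n ∧
          (r + 1) ^ ((r + 1) * n) ≤ m ∧ m ≤ (r + 1) ^ ((r + 1) * n + 1) - 1} := by
  constructor
  · intro l
    have hP : (r + 1) * l < (r + 1) ^ ((r + 1) * (l + 1)) := by
      have h1 : (r + 1) ^ (l + 1) ≤ (r + 1) ^ ((r + 1) * (l + 1)) :=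
        Nat.pow_le_pow_right (by omega) (by nlinarith)
      have h2 : l < (r + 1) ^ l := Nat.lt_pow_self (by omega)
      have h3 : (r + 1) * l < (r + 1) * (r + 1) ^ l := Nat.mul_lt_mul_of_pos_left h2 (by omega)
      rw [pow_succ'] at h1
      omega
    have hS : (r + 1) ^ ((r + 1) * (l + 1) + 1) = (r + 1) * (r + 1) ^ ((r + 1) * (l + 1)) :=
      pow_succ' _ _
    generalize hPdef : (r + 1) ^ ((r + 1) * (l + 1)) = P at hP hS
    refine ⟨P + l, fun j hj1 hj2 i hi1 hi2 => ?_⟩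
    have hlow : P + l ≤ j * (P + l) := Nat.le_mul_of_pos_left _ hj1
    have hup : j * (P + l) ≤ r * (P + l) := Nat.mul_le_mul_right _ hj2
    have hcast : ((j * (P + l) : ℕ) : ℤ) = (j : ℤ) * ((P + l : ℕ) : ℤ) := by push_cast; ring
    rw [← hcast]
    have e1 : r * (P + l) = r * P + r * l := by ring
    have e2 : (r + 1) * P = r * P + P := by ring
    have e3 : (r + 1) * l = r * l + l := by ring
    refine ⟨(((j * (P + l) : ℕ) : ℤ) + i).toNat, by omega, l + 1, by omega, ?_, ?_⟩
    · rw [hPdef]; omega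
    · rw [hS]; omega
  · rintro k ⟨n, hn, h1, h2⟩ ⟨m, hm, h3, h4⟩
    have p1 : 0 < (r + 1) ^ ((r + 1) * n + 1) := by positivity
    have p2 : 0 < (r + 1) ^ ((r + 1) * m + 1) := by positivity
    have a1 : (r + 1) ^ ((r + 1) * n + 1) < (r + 1) ^ ((r + 1) * m + 1) := by
      have := Nat.mul_le_mul_left (r + 1) h1
      rw [← pow_succ'] at this
      omega
    have a2 : (r + 1) ^ ((r + 1) * m) < (r + 1) ^ ((r + 1) * n + 1 + 1) := by
      have : (r + 1) * k < (r + 1) * (r + 1) ^ ((r + 1) * n + 1) :=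
        Nat.mul_lt_mul_of_pos_left (by omega) (by omega)
      rw [← pow_succ'] at this
      omega
    have b1 := (Nat.pow_lt_pow_iff_right (by omega)).1 a1
    have b2 := (Nat.pow_lt_pow_iff_right (by omega)).1 a2
    have c : n < m := Nat.lt_of_mul_lt_mul_left (a := r + 1) (by omega)
    have d := Nat.mul_le_mul_left (r + 1) c
    rw [Nat.succ_eq_add_one, Nat.mul_add] at d
    omega

/-- for each positive integer `r`, the set
`K = ⋃_{n≥1} [(r+1)^{(r+1)n}, (r+1)^{(r+1)n+1} - 1]` is `r`-thick and `k ∈ K` implies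
`(r+1)k ∉ K`; in particular, for `r = 1`, `K = ⋃_{n≥1} [2^{2n}, 2^{2n+1} - 1]` is thick
and `k ∈ K` implies `2k ∉ K`. -/
theorem rThick_powerIntervals_and_doubling :
    (∀ r : ℕ, 1 ≤ r →
      RThickNat r {m : ℕ | ∃ n : ℕ, 1 ≤ n ∧
          (r + 1) ^ ((r + 1) * n) ≤ m ∧ m ≤ (r + 1) ^ ((r + 1) * n + 1) - 1} ∧
      ∀ k ∈ {m : ℕ | ∃ n : ℕ, 1 ≤ n ∧
          (r + 1) ^ ((r + 1) * n) ≤ m ∧ m ≤ (r + 1) ^ ((r + 1) * n + 1) - 1},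
        (r + 1) * k ∉ {m : ℕ | ∃ n : ℕ, 1 ≤ n ∧
          (r + 1) ^ ((r + 1) * n) ≤ m ∧ m ≤ (r + 1) ^ ((r + 1) * n + 1) - 1}) ∧
    (RThickNat 1 {m : ℕ | ∃ n : ℕ, 1 ≤ n ∧ 2 ^ (2 * n) ≤ m ∧ m ≤ 2 ^ (2 * n + 1) - 1} ∧
      ∀ k ∈ {m : ℕ | ∃ n : ℕ, 1 ≤ n ∧ 2 ^ (2 * n) ≤ m ∧ m ≤ 2 ^ (2 * n + 1) - 1},
        2 * k ∉ {m : ℕ | ∃ n : ℕ, 1 ≤ n ∧ 2 ^ (2 * n) ≤ m ∧ m ≤ 2 ^ (2 * n + 1) - 1}) := by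
  exact ⟨aux_main, aux_main 1 le_rfl⟩
end

section
/- If M ⊆ ℕ has density zero, then for every positive integer r the complement ℕ ∖ M contains an r-thick set. -/
open Filter Set

/-- `M ⊆ ℕ` has density zero: `|M ∩ {1,…,N}| / N → 0`. -/
def DensityZero (M : Set ℕ) : Prop :=
  Tendsto (fun N : ℕ => ((M ∩ Set.Icc 1 N).ncard : ℝ) / N) atTop (nhds 0)

/-- if `M ⊆ ℕ` has density zero, then for every positive integer `r` the
complement of `M` contains an `r`-thick set. -/
theorem compl_contains_rThick_of_densityZero
    (M : Set ℕ) (hd : DensityZero M) (r : ℕ) (hr : 1 ≤ r) :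
    ∃ K : Set ℕ, K ⊆ Mᶜ ∧ RThickNat r K := by
  classical
  refine ⟨Mᶜ, subset_rfl, ?_⟩
  intro ℓ
  by_contra hcon
  have hbad : ∀ k : ℕ, ∃ j : ℕ, ∃ i : ℤ, ∃ m : ℕ, ℓ < k →
      (1 ≤ j ∧ j ≤ r ∧ -(ℓ : ℤ) ≤ i ∧ i ≤ ℓ ∧ (m : ℤ) = j * k + i ∧ m ∈ M) := by
    intro k
    by_cases hk : ℓ < k
    · by_contra h
      apply hcon
      refine ⟨k, fun j h1 h2 i h3 h4 => ?_⟩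
      have hpos : 0 ≤ (j : ℤ) * k + i := by
        have : (1 : ℤ) ≤ j := by exact_mod_cast h1
        have : (ℓ : ℤ) < k := by exact_mod_cast hk
        nlinarith
      refine ⟨((j : ℤ) * k + i).toNat, Int.toNat_of_nonneg hpos, fun hm => h ?_⟩
      exact ⟨j, i, _, fun _ => ⟨h1, h2, h3, h4, Int.toNat_of_nonneg hpos, hm⟩⟩
    · exact ⟨0, 0, 0, fun h => absurd h hk⟩
  choose J I m h using hbad
  have hcount : ∀ N : ℕ, ℓ ≤ N →
      N - ℓ ≤ r * ((2 * ℓ + 1) * (M ∩ Set.Icc 1 ((r + 1) * N)).ncard) := by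
    intro N hN
    have hfin : (M ∩ Set.Icc 1 ((r + 1) * N)).Finite :=
      (Set.finite_Icc 1 ((r + 1) * N)).inter_of_right M
    have hc := Finset.card_le_card_of_injOn (s := Finset.Ioc ℓ N)
      (t := Finset.Icc 1 r ×ˢ (Finset.Icc (-(ℓ : ℤ)) ℓ ×ˢ hfin.toFinset))
      (fun k => (J k, I k, m k)) ?_ ?_
    · rw [Finset.card_product, Finset.card_product, Nat.card_Ioc, Nat.card_Icc, Int.card_Icc,
        ← Set.ncard_eq_toFinset_card _ hfin] at hc
      have e : ((ℓ : ℤ) + 1 - -(ℓ : ℤ)).toNat = 2 * ℓ + 1 := by omega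
      rw [e] at hc
      simpa using hc
    · intro k hk
      have hk' := Finset.mem_Ioc.1 hk
      obtain ⟨h1, h2, h3, h4, h5, h6⟩ := h k hk'.1
      have a1 : (1 : ℤ) ≤ J k := by exact_mod_cast h1
      have a2 : (J k : ℤ) ≤ r := by exact_mod_cast h2
      have a3 : (ℓ : ℤ) < k := by exact_mod_cast hk'.1
      have a4 : (k : ℤ) ≤ N := by exact_mod_cast hk'.2
      have b1 : (1 : ℤ) ≤ m k := by nlinarith
      have b2 : (m k : ℤ) ≤ (r + 1) * N := by
        have : (J k : ℤ) * k ≤ r * N := by gcongr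
        nlinarith
      have c1 : 1 ≤ m k := by exact_mod_cast b1
      have c2 : m k ≤ (r + 1) * N := by exact_mod_cast b2
      simp only [Finset.mem_coe, Finset.mem_product, Finset.mem_Icc, Set.Finite.mem_toFinset]
      exact ⟨⟨h1, h2⟩, ⟨h3, h4⟩, h6, c1, c2⟩
    · intro a ha b hb hab
      have ha' := h a (Finset.mem_Ioc.1 ha).1
      have hb' := h b (Finset.mem_Ioc.1 hb).1
      simp only [Prod.mk.injEq] at hab
      obtain ⟨e1, e2, e3⟩ := hab
      have h5 := ha'.2.2.2.2.1
      rw [e1, e2, e3, hb'.2.2.2.2.1] at h5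
      have hj : (J b : ℤ) ≠ 0 := by have := hb'.1; omega
      have := mul_left_cancel₀ hj (add_right_cancel h5)
      exact_mod_cast this.symm
  set D : ℝ := r * (2 * ℓ + 1) * (r + 1) with hD
  have hr' : (1 : ℝ) ≤ r := by exact_mod_cast hr
  have hDpos : 0 < D := by positivity
  have hev := hd.eventually (gt_mem_nhds (show (0 : ℝ) < 1 / (4 * D) by positivity))
  obtain ⟨N₀, hN₀⟩ := eventually_atTop.1 hev
  set N := N₀ + 2 * ℓ + 1 with hN
  have h1 := hN₀ ((r + 1) * N) (by nlinarith)
  have h2 := hcount N (by omega)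
  have h2' : (N : ℝ) - ℓ ≤
      r * ((2 * ℓ + 1) * ((M ∩ Set.Icc 1 ((r + 1) * N)).ncard : ℝ)) := by
    rw [← Nat.cast_sub (by omega)]
    exact_mod_cast h2
  have hNpos : (0 : ℝ) < N := by
    have : 0 < N := by omega
    exact_mod_cast this
  have hNl : 2 * (ℓ : ℝ) ≤ N := by
    have : 2 * ℓ ≤ N := by omega
    exact_mod_cast this
  generalize ((M ∩ Set.Icc 1 ((r + 1) * N)).ncard : ℝ) = c at h1 h2'
  push_cast at h1
  rw [div_lt_div_iff₀ (by positivity) (by positivity)] at h1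
  have h3 : ((r : ℝ) + 1) * (4 * (r * ((2 * ℓ + 1) * c))) < (r + 1) * N := by
    rw [hD] at h1
    linarith
  have h4 := lt_of_mul_lt_mul_left h3 (by positivity)
  linarith
end

section
/- Let T be an invertible measure-preserving transformation of a standard probability space (X, ℬ, μ) and let (s_n) be a sequence of positive integers. Assume: (1) for every irrational real number α, the sequence of fractional parts {s_n α} is dense in [0, 1); (2) T is totally ergodic; (3) there is a constant K > 1 such that for all measurable sets A, B, limsup_{n→∞} μ(T^{s_n} A ∩ B) ≤ K μ(A) μ(B). Then T is mixing along (s_n), i.e., μ(T^{s_n} A ∩ B) → μ(A)μ(B) as n → ∞ for all measurable A, B. -/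
open MeasureTheory Filter Set

theorem om_compact {E : Type*} [NormedAddCommGroup E] [InnerProductSpace ℂ E] [CompleteSpace E]
    (Q : E →L[ℂ] E) (C : ℝ)
    (h : ∀ s : Finset E, Orthonormal ℂ (fun x : s => (x : E)) → ∑ x ∈ s, ‖Q x‖ ^ 2 ≤ C) :
    IsCompactOperator Q := by
  classical
  let S : Set ℝ := {t | ∃ s : Finset E, Orthonormal ℂ (fun x : s => (x : E)) ∧
    ∑ x ∈ s, ‖Q x‖ ^ 2 = t}
  have hbdd : BddAbove S := ⟨C, by rintro t ⟨s, hs, rfl⟩; exact h s hs⟩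
  have hne : S.Nonempty := ⟨0, ∅, ⟨by simp, by rintro ⟨x, hx⟩; simp at hx⟩, by simp⟩
  have key : ∀ ε > 0, ∃ R : E →L[ℂ] E, IsCompactOperator R ∧ ‖Q - R‖ ≤ ε := by
    intro ε hε
    obtain ⟨t, ⟨s, hs, rfl⟩, hlt⟩ := exists_lt_of_lt_csSup hne
      (show sSup S - ε ^ 2 < sSup S by have := pow_pos hε 2; linarith)
    let V : Submodule ℂ E := Submodule.span ℂ (s : Set E)
    have : FiniteDimensional ℂ V := FiniteDimensional.span_finset ℂ s
    refine ⟨Q ∘L V.starProjection, ?_, ?_⟩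
    · have h1 : IsCompactOperator (Q ∘L V.subtypeL) :=
        have := FiniteDimensional.proper ℂ V
        isCompactOperator_of_locallyCompactSpace_rng (Q ∘L V.subtypeL)
      exact h1.comp_clm V.orthogonalProjectionOnto
    · refine ContinuousLinearMap.opNorm_le_bound _ hε.le fun f => ?_
      set w := f - V.starProjection f with hw
      have hwV : ∀ v ∈ V, inner ℂ v w = 0 := by
        have : w ∈ Vᗮ := Submodule.sub_starProjection_mem_orthogonal f
        exact fun v hv => this v hv
      have hwn : ‖w‖ ≤ ‖f‖ := by
        have := V.norm_sq_eq_add_norm_sq_starProjection f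
        have h2 : w = Vᗮ.starProjection f := by
          rw [Submodule.starProjection_orthogonal_val]
        rw [← h2] at this
        nlinarith [norm_nonneg w, norm_nonneg f, sq_nonneg ‖V.starProjection f‖]
      have e1 : (Q - Q ∘L V.starProjection) f = Q w := by simp [hw]
      rw [e1]
      refine le_trans ?_ (mul_le_mul_of_nonneg_left hwn hε.le)
      by_cases hw0 : w = 0
      · simp [hw0]
      have hwp : 0 < ‖w‖ := norm_pos_iff.mpr hw0
      let u : E := ((‖w‖⁻¹ : ℝ) : ℂ) • w
      have hu1 : ‖u‖ = 1 := by
        simp [u, norm_smul, hwp.ne']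
      have huV : ∀ v ∈ V, inner ℂ v u = 0 := by
        intro v hv; simp [u, hwV v hv]
      have hsV : ∀ v ∈ s, v ∈ V := fun v hv => Submodule.subset_span hv
      have hus : u ∉ s := by
        intro hu
        have := huV u (hsV u hu)
        rw [inner_self_eq_zero] at this
        simp [this] at hu1
      have hort : Orthonormal ℂ (fun x : (insert u s : Finset E) => (x : E)) := by
        constructor
        · rintro ⟨x, hx⟩
          rcases Finset.mem_insert.mp hx with rfl | hx'
          · exact hu1
          · exact hs.1 ⟨x, hx'⟩
        · rintro ⟨x, hx⟩ ⟨y, hy⟩ hxy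
          have hxy' : x ≠ y := fun h => hxy (Subtype.ext h)
          show inner ℂ x y = 0
          rcases Finset.mem_insert.mp hx with rfl | hx'
          · rcases Finset.mem_insert.mp hy with rfl | hy'
            · exact absurd rfl hxy'
            · rw [inner_eq_zero_symm]; exact huV y (hsV y hy')
          · rcases Finset.mem_insert.mp hy with rfl | hy'
            · exact huV x (hsV x hx')
            · exact hs.2 (i := ⟨x, hx'⟩) (j := ⟨y, hy'⟩) (fun h => hxy' (congrArg Subtype.val h))
      have hle := le_csSup hbdd ⟨_, hort, rfl⟩
      rw [Finset.sum_insert hus] at hle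
      have hQu : ‖Q u‖ ≤ ε := by
        have : ‖Q u‖ ^ 2 ≤ ε ^ 2 := by linarith
        exact (sq_le_sq₀ (norm_nonneg _) hε.le).mp this
      have : Q w = ((‖w‖ : ℝ) : ℂ) • Q u := by
        rw [← map_smul]; congr 1
        simp only [u, smul_smul]; rw [← Complex.ofReal_mul, mul_inv_cancel₀ hwp.ne']; simp
      rw [this, norm_smul, Complex.norm_real, norm_norm, mul_comm]
      exact mul_le_mul_of_nonneg_right hQu hwp.le
  have : Q ∈ closure {f : E →L[ℂ] E | IsCompactOperator f} := by
    rw [Metric.mem_closure_iff]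
    intro ε hε
    obtain ⟨R, hR, hR'⟩ := key (ε / 2) (by linarith)
    exact ⟨R, hR, by rw [dist_eq_norm]; linarith⟩
  exact isClosed_setOfPred_isCompactOperator.closure_subset_iff.mpr subset_rfl this

theorem om_eigen {E : Type*} [NormedAddCommGroup E] [InnerProductSpace ℂ E] [CompleteSpace E]
    (Q : E →L[ℂ] E) (hQ : IsCompactOperator Q) (hQ0 : Q ≠ 0) (U : E ≃ₗᵢ[ℂ] E)
    (hU : ∀ f, Q (U f) = U (Q f)) (v : E) (hv : Q v = 0) :
    ∃ f : E, f ≠ 0 ∧ inner ℂ v f = 0 ∧ ∃ c : ℂ, U f = c • f := by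
  let S : E →L[ℂ] E := (ContinuousLinearMap.adjoint Q) ∘L Q
  have hSc : IsCompactOperator S := hQ.clm_comp (ContinuousLinearMap.adjoint Q)
  have hSi : ∀ f g, inner ℂ (S f) g = inner ℂ (Q f) (Q g) := fun f g => by
    simp [S, ContinuousLinearMap.adjoint_inner_left]
  have hSi' : ∀ f g, inner ℂ f (S g) = inner ℂ (Q f) (Q g) := fun f g => by
    simp [S, ContinuousLinearMap.adjoint_inner_right]
  have hSs : S.IsSymmetric := fun f g => (hSi f g).trans (hSi' f g).symm
  have hS0 : S ≠ 0 := by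
    intro h
    apply hQ0
    ext f
    have := hSi f f
    rw [h] at this
    simpa using this.symm
  have hSU : ∀ f, S (U f) = U (S f) := by
    intro f
    refine ext_inner_right ℂ fun g => ?_
    rw [hSi, hU]
    have h2 : Q g = U (Q (U.symm g)) := by rw [← hU]; simp
    rw [h2, U.inner_map_map, ← hSi]
    conv_rhs => rw [← U.apply_symm_apply g]
    rw [U.inner_map_map]
  have := (ContinuousLinearMap.eq_zero_of_forall_hasEigenvalue_eq_zero hSc hSs).not.mpr hS0
  push Not at this
  obtain ⟨l, hl, hl0⟩ := this
  have := ContinuousLinearMap.finite_dimensional_eigenspace hSc l hl0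
  let V := Module.End.eigenspace S.toLinearMap l
  have hmem : ∀ f, f ∈ V ↔ S f = l • f := fun f => Module.End.mem_eigenspace_iff
  have hUV : ∀ f ∈ V, U.toLinearEquiv.toLinearMap f ∈ V := by
    intro f hf
    rw [hmem] at hf ⊢
    show S (U f) = l • U f
    rw [hSU, hf, map_smul]
  have : Nontrivial V := by
    rw [Submodule.nontrivial_iff_ne_bot]; exact hl
  obtain ⟨c, hc⟩ := Module.End.exists_eigenvalue (U.toLinearEquiv.toLinearMap.restrict hUV)
  obtain ⟨⟨f, hfV⟩, hf⟩ := hc.exists_hasEigenvector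
  refine ⟨f, fun h => hf.2 (Subtype.ext h), ?_, c, ?_⟩
  · have h1 : inner ℂ v (S f) = 0 := by rw [hSi', hv, inner_zero_left]
    rw [(hmem f).mp hfV, inner_smul_right] at h1
    exact (mul_eq_zero.mp h1).resolve_left hl0
  · exact congrArg Subtype.val hf.apply_eq_smul

theorem om_limit {E : Type*} [NormedAddCommGroup E] [InnerProductSpace ℂ E] [CompleteSpace E]
    (V : ℕ → E →L[ℂ] E) (hV : ∀ n f, ‖V n f‖ ≤ ‖f‖) (F : Ultrafilter ℕ) :
    ∃ P : E →L[ℂ] E, ∀ f g, Tendsto (fun n => inner ℂ f (V n g)) F (nhds (inner ℂ f (P g))) := by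
  have hb : ∀ f g n, ‖inner ℂ f (V n g)‖ ≤ ‖f‖ * ‖g‖ := fun f g n =>
    (norm_inner_le_norm _ _).trans (mul_le_mul_of_nonneg_left (hV n g) (norm_nonneg _))
  have hex : ∀ f g, ∃ z : ℂ, Tendsto (fun n => inner ℂ f (V n g)) F (nhds z) := by
    intro f g
    have hK : IsCompact (Metric.closedBall (0 : ℂ) (‖f‖ * ‖g‖)) := isCompact_closedBall _ _
    obtain ⟨z, -, hz⟩ := hK.ultrafilter_le_nhds (F.map (fun n => inner ℂ f (V n g)))
      (by
        rw [le_principal_iff]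
        refine Filter.mem_map.mpr (Filter.Eventually.of_forall (fun n => ?_))
        simpa using hb f g n)
    exact ⟨z, hz⟩
  choose B hB using hex
  have uniq : ∀ f g z, Tendsto (fun n => inner ℂ f (V n g)) F (nhds z) → z = B f g :=
    fun f g z hz => tendsto_nhds_unique hz (hB f g)
  have hBb : ∀ f g, ‖B f g‖ ≤ ‖f‖ * ‖g‖ := fun f g =>
    le_of_tendsto (hB f g).norm (Eventually.of_forall (hb f g))
  -- functional in f (conjugate linear): use its conjugate
  let L : E →L⋆[ℂ] E →L[ℂ] ℂ := LinearMap.mkContinuous₂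
    (LinearMap.mk₂'ₛₗ (starRingEnd ℂ) (RingHom.id ℂ) B
      (fun f f' g => by
        symm; apply uniq; simpa only [inner_add_left] using (hB f g).add (hB f' g))
      (fun c f g => by
        symm; apply uniq
        simpa only [inner_smul_left, smul_eq_mul] using (hB f g).const_mul (starRingEnd ℂ c))
      (fun f g g' => by
        symm; apply uniq; simpa only [map_add, inner_add_right] using (hB f g).add (hB f g'))
      (fun c f g => by
        symm; apply uniq
        simpa only [map_smul, inner_smul_right, smul_eq_mul, RingHom.id_apply] using (hB f g).const_mul c))
    1 (fun f g => by simpa using hBb f g)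
  refine ⟨ContinuousLinearMap.adjoint (InnerProductSpace.continuousLinearMapOfBilin L), fun f g => ?_⟩
  rw [ContinuousLinearMap.adjoint_inner_right, InnerProductSpace.continuousLinearMapOfBilin_apply]
  exact hB f g

theorem om_hs {X : Type*} [MeasurableSpace X] (μ : Measure X) [IsProbabilityMeasure μ]
    (Q : Lp ℂ 2 μ →L[ℂ] Lp ℂ 2 μ) (C : ℝ)
    (hQ : ∀ f : Lp ℂ 2 μ, ∀ᵐ x ∂μ, ‖(Q f) x‖ ≤ C * ‖f‖)
    (s : Finset (Lp ℂ 2 μ)) (hs : Orthonormal ℂ (fun x : s => (x : Lp ℂ 2 μ))) :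
    ∑ f ∈ s, ‖Q f‖ ^ 2 ≤ C ^ 2 := by
  classical
  let D := TopologicalSpace.denseSeq (EuclideanSpace ℂ s)
  have h1 : ∀ᵐ x ∂μ, ∀ n, ‖∑ i : s, (D n) i * (Q i) x‖ ≤ C * ‖D n‖ := by
    rw [ae_all_iff]
    intro n
    have hn : ‖∑ i : s, (D n) i • (i : Lp ℂ 2 μ)‖ = ‖D n‖ := by
      rw [← sq_eq_sq₀ (norm_nonneg _) (norm_nonneg _), EuclideanSpace.norm_sq_eq]
      rw [← Complex.ofReal_inj]
      have := hs.inner_sum (D n) (D n) Finset.univ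
      rw [inner_self_eq_norm_sq_to_K] at this
      push_cast at this ⊢
      rw [show ((‖∑ i : s, (D n) i • (i : Lp ℂ 2 μ)‖ : ℂ)) ^ 2 = _ from this]
      refine Finset.sum_congr rfl fun i _ => ?_
      rw [← Complex.conj_mul']
    have h2 := hQ (∑ i : s, (D n) i • (i : Lp ℂ 2 μ))
    have h3 : ((Q (∑ i : s, (D n) i • (i : Lp ℂ 2 μ)) : Lp ℂ 2 μ) : X → ℂ) =ᵐ[μ]
        fun x => ∑ i : s, (D n) i * (Q i) x := by
      rw [map_sum]
      refine (Lp.coeFn_finsetSum _ _).trans ?_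
      have : ∀ᵐ x ∂μ, ∀ i : s, (Q ((D n) i • (i : Lp ℂ 2 μ))) x = (D n) i * (Q i) x := by
        rw [ae_all_iff]
        intro i
        rw [map_smul]
        filter_upwards [Lp.coeFn_smul ((D n) i) (Q i)] with x hx
        simpa using hx
      filter_upwards [this] with x hx
      simp only [Finset.sum_apply]
      exact Finset.sum_congr rfl fun i _ => hx i
    filter_upwards [h2, h3] with x hx hx'
    rw [← hx', ← hn]; exact hx
  have h4 : ∀ᵐ x ∂μ, ∑ i : s, ‖(Q i) x‖ ^ 2 ≤ C ^ 2 := by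
    filter_upwards [h1] with x hx
    have hall : ∀ c : EuclideanSpace ℂ s, ‖∑ i : s, c i * (Q i) x‖ ≤ C * ‖c‖ := by
      have hcl : IsClosed {c : EuclideanSpace ℂ s | ‖∑ i : s, c i * (Q i) x‖ ≤ C * ‖c‖} :=
        isClosed_le (by fun_prop) (by fun_prop)
      intro c
      have := (TopologicalSpace.denseRange_denseSeq (EuclideanSpace ℂ s)).closure_eq
      have hsub := hcl.closure_subset_iff.mpr (show range D ⊆ _ by rintro _ ⟨n, rfl⟩; exact hx n)
      exact hsub (by rw [this]; trivial)
    have h5 := hall (WithLp.toLp 2 fun i => starRingEnd ℂ ((Q i) x))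
    have h6 : ‖(WithLp.toLp 2 fun i : s => starRingEnd ℂ ((Q i) x) : EuclideanSpace ℂ s)‖ ^ 2
        = ∑ i : s, ‖(Q i) x‖ ^ 2 := by
      rw [EuclideanSpace.norm_sq_eq]; simp
    have h7 : (∑ i : s, starRingEnd ℂ ((Q i) x) * (Q i) x : ℂ) = ((∑ i : s, ‖(Q i) x‖ ^ 2 : ℝ) : ℂ) := by
      push_cast
      exact Finset.sum_congr rfl fun i _ => Complex.conj_mul' _
    simp only at h5
    rw [h7, Complex.norm_real, ← h6] at h5
    rw [← h6]
    set t := ‖(WithLp.toLp 2 fun i : s => starRingEnd ℂ ((Q i) x) : EuclideanSpace ℂ s)‖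
    have ht : 0 ≤ t := norm_nonneg _
    rw [Real.norm_of_nonneg (by positivity)] at h5
    by_cases ht0 : t = 0
    · rw [ht0]; nlinarith
    have : t ≤ C := by
      have htp : 0 < t := lt_of_le_of_ne ht (Ne.symm ht0)
      nlinarith
    gcongr
  have hn : ∀ f : Lp ℂ 2 μ, ‖f‖ ^ 2 = ∫ x, ‖f x‖ ^ 2 ∂μ := by
    intro f
    have := L2.inner_def (𝕜 := ℂ) f f
    rw [inner_self_eq_norm_sq_to_K] at this
    have h8 : (∫ x, inner ℂ (f x) (f x) ∂μ) = ((∫ x, ‖f x‖ ^ 2 ∂μ : ℝ) : ℂ) := by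
      rw [← integral_complex_ofReal]
      congr 1; ext x
      rw [inner_self_eq_norm_sq_to_K]; push_cast; rfl
    rw [h8] at this
    exact Complex.ofReal_injective (by push_cast at this ⊢; exact this)
  have hintegral : ∀ f : Lp ℂ 2 μ, Integrable (fun x => ‖f x‖ ^ 2) μ := fun f =>
    (memLp_two_iff_integrable_sq_norm (Lp.aestronglyMeasurable f)).mp (Lp.memLp f)
  calc ∑ f ∈ s, ‖Q f‖ ^ 2 = ∑ i : s, ‖Q i‖ ^ 2 := (Finset.sum_coe_sort s (fun f => ‖Q f‖ ^ 2)).symm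
    _ = ∑ i : s, ∫ x, ‖(Q i) x‖ ^ 2 ∂μ := Finset.sum_congr rfl fun i _ => hn _
    _ = ∫ x, ∑ i : s, ‖(Q i) x‖ ^ 2 ∂μ := (integral_finsetSum _ fun i _ => hintegral _).symm
    _ ≤ ∫ x, C ^ 2 ∂μ := integral_mono_ae (integrable_finsetSum _ fun i _ => hintegral _)
        (integrable_const _) h4
    _ = C ^ 2 := by simp

theorem om_linfty {X : Type*} [MeasurableSpace X] (μ : Measure X) [IsProbabilityMeasure μ]
    (h : X → ℂ) (hh : Integrable h μ) (M : ℝ)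
    (hM : ∀ A, MeasurableSet A → ‖∫ x in A, h x ∂μ‖ ≤ M * μ.real A) :
    ∀ᵐ x ∂μ, ‖h x‖ ≤ 2 * M := by
  have hre : ∀ A, ∫ x in A, (h x).re ∂μ = (∫ x in A, h x ∂μ).re := fun A =>
    integral_re (𝕜 := ℂ) hh.integrableOn
  have him : ∀ A, ∫ x in A, (h x).im ∂μ = (∫ x in A, h x ∂μ).im := fun A =>
    integral_im (𝕜 := ℂ) hh.integrableOn
  have key : ∀ g : X → ℝ, Integrable g μ →
      (∀ A, MeasurableSet A → |∫ x in A, g x ∂μ| ≤ M * μ.real A) → ∀ᵐ x ∂μ, |g x| ≤ M := by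
    intro g hg hgM
    have h1 : g ≤ᵐ[μ] fun _ => M := ae_le_of_forall_setIntegral_le hg (integrable_const _)
      fun A hA _ => by
        simp only [setIntegral_const, smul_eq_mul]
        have := (abs_le.mp (hgM A hA)).2
        linarith
    have h2 : (fun _ => -M) ≤ᵐ[μ] g := ae_le_of_forall_setIntegral_le (integrable_const _) hg
      fun A hA _ => by
        simp only [setIntegral_const, smul_eq_mul]
        have := (abs_le.mp (hgM A hA)).1
        linarith
    filter_upwards [h1, h2] with x a b
    exact abs_le.mpr ⟨b, a⟩
  have a := key (fun x => (h x).re) hh.re fun A hA => by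
    rw [hre]; exact (Complex.abs_re_le_norm _).trans (hM A hA)
  have b := key (fun x => (h x).im) hh.im fun A hA => by
    rw [him]; exact (Complex.abs_im_le_norm _).trans (hM A hA)
  filter_upwards [a, b] with x ha hb
  have := Complex.norm_le_abs_re_add_abs_im (h x)
  linarith

theorem om_limsup_add (u v : ℕ → ENNReal) :
    limsup (fun n => u n + v n) atTop ≤ limsup u atTop + limsup v atTop := by
  by_cases hu : limsup u atTop = ⊤
  · simp [hu]
  by_cases hv : limsup v atTop = ⊤
  · simp [hv]
  refine ENNReal.le_of_forall_pos_le_add fun ε hε _ => ?_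
  have hε2 : ((ε / 2 : NNReal) : ENNReal) ≠ 0 := by simpa using hε.ne'
  have h1 := eventually_lt_of_limsup_lt (ENNReal.lt_add_right hu hε2)
  have h2 := eventually_lt_of_limsup_lt (ENNReal.lt_add_right hv hε2)
  refine limsup_le_of_le (by isBoundedDefault) ?_
  filter_upwards [h1, h2] with n a b
  calc u n + v n ≤ (limsup u atTop + ((ε / 2 : NNReal) : ENNReal)) +
        (limsup v atTop + ((ε / 2 : NNReal) : ENNReal)) := add_le_add a.le b.le
    _ = limsup u atTop + limsup v atTop +
        (((ε / 2 : NNReal) : ENNReal) + ((ε / 2 : NNReal) : ENNReal)) := by ring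
    _ = _ := by rw [← ENNReal.coe_add, add_halves]

theorem om_lint {X : Type*} [MeasurableSpace X] (μ : Measure X) [IsProbabilityMeasure μ]
    (S : ℕ → X → X) (hS : ∀ n, MeasurePreserving (S n) μ μ) (K : ENNReal)
    (A : Set X)
    (hb : ∀ B, MeasurableSet B → limsup (fun n => μ (A ∩ S n ⁻¹' B)) atTop ≤ K * (μ A * μ B))
    (g : X → ENNReal) (hg : Measurable g) (hgt : ∀ x, g x ≠ ⊤) (hgi : ∫⁻ x, g x ∂μ ≠ ⊤) :
    limsup (fun n => ∫⁻ x in A, g (S n x) ∂μ) atTop ≤ K * μ A * ∫⁻ x, g x ∂μ := by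
  have simple : ∀ φ : SimpleFunc X ENNReal, (∀ x, φ x ≠ ⊤) →
      limsup (fun n => ∫⁻ x in A, φ (S n x) ∂μ) atTop ≤ K * μ A * ∫⁻ x, φ x ∂μ := by
    intro φ
    induction φ using SimpleFunc.induction with
    | @const c B hB =>
      intro hc
      simp only [SimpleFunc.const_zero, SimpleFunc.coe_piecewise, SimpleFunc.coe_const,
        SimpleFunc.coe_zero, piecewise_eq_indicator] at hc ⊢
      have hlin : ∀ n, ∫⁻ x in A, B.indicator (Function.const X c) (S n x) ∂μ
          = c * μ (A ∩ S n ⁻¹' B) := by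
        intro n
        have : (fun x => B.indicator (Function.const X c) (S n x))
            = (S n ⁻¹' B).indicator (fun _ => c) := by
          ext x; rfl
        rw [this, lintegral_indicator_const ((hS n).measurable hB),
          Measure.restrict_apply ((hS n).measurable hB), inter_comm]
      simp only [hlin]
      have hB' : ∫⁻ x, B.indicator (Function.const X c) x ∂μ = c * μ B :=
        lintegral_indicator_const hB c
      rw [hB']
      by_cases hct : c = ⊤
      · have : B = ∅ := by
          by_contra hne
          obtain ⟨x, hx⟩ := nonempty_iff_ne_empty.mpr hne
          exact hc x (by simp [hx, hct])
        simp [this]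
      · rw [ENNReal.limsup_const_mul_of_ne_top hct]
        calc c * _ ≤ c * (K * (μ A * μ B)) := by gcongr; exact hb B hB
          _ = _ := by ring
    | @add φ ψ _ hφ hψ =>
      intro hc
      simp only [SimpleFunc.coe_add, Pi.add_apply] at hc ⊢
      have hm : ∀ n, Measurable (fun x => φ (S n x)) := fun n => φ.measurable.comp (hS n).measurable
      simp only [lintegral_add_left (hm _), lintegral_add_left φ.measurable]
      rw [mul_add]
      refine (om_limsup_add _ _).trans ?_
      exact add_le_add (hφ fun x h => hc x (by simp [h])) (hψ fun x h => hc x (by simp [h]))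
  let φ := SimpleFunc.eapprox g
  have hφle : ∀ n x, φ n x ≤ g x := fun n x => by
    rw [← SimpleFunc.iSup_eapprox_apply hg x]; exact le_iSup (fun k => SimpleFunc.eapprox g k x) n
  have hlim : Tendsto (fun n => ∫⁻ x, φ n x ∂μ) atTop (nhds (∫⁻ x, g x ∂μ)) := by
    refine lintegral_tendsto_of_tendsto_of_monotone (fun n => (φ n).measurable.aemeasurable) ?_ ?_
    · exact Eventually.of_forall fun x n m hnm => SimpleFunc.monotone_eapprox g hnm x
    · exact Eventually.of_forall fun x => SimpleFunc.tendsto_eapprox hg x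
  have step : ∀ k, limsup (fun n => ∫⁻ x in A, g (S n x) ∂μ) atTop ≤
      K * μ A * ∫⁻ x, g x ∂μ + (∫⁻ x, g x ∂μ - ∫⁻ x, φ k x ∂μ) := by
    intro k
    have hsub : ∫⁻ x, (g x - φ k x) ∂μ = ∫⁻ x, g x ∂μ - ∫⁻ x, φ k x ∂μ :=
      lintegral_sub (φ k).measurable
        (ne_top_of_le_ne_top hgi (lintegral_mono (hφle k))) (Eventually.of_forall (hφle k))
    have hn : ∀ n, ∫⁻ x in A, g (S n x) ∂μ ≤ ∫⁻ x in A, φ k (S n x) ∂μ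
        + (∫⁻ x, g x ∂μ - ∫⁻ x, φ k x ∂μ) := by
      intro n
      calc ∫⁻ x in A, g (S n x) ∂μ
          = ∫⁻ x in A, (φ k (S n x) + (g (S n x) - φ k (S n x))) ∂μ := by
            congr 1; ext x; rw [add_tsub_cancel_of_le (hφle k _)]
        _ = ∫⁻ x in A, φ k (S n x) ∂μ + ∫⁻ x in A, (g (S n x) - φ k (S n x)) ∂μ :=
            lintegral_add_left ((φ k).measurable.comp (hS n).measurable) _
        _ ≤ _ := by
            gcongr
            rw [← hsub]
            refine (setLIntegral_le_lintegral _ _).trans ?_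
            exact ((hS n).lintegral_comp (hg.sub (φ k).measurable)).le
    calc _ ≤ limsup (fun n => ∫⁻ x in A, φ k (S n x) ∂μ
        + (∫⁻ x, g x ∂μ - ∫⁻ x, φ k x ∂μ)) atTop := limsup_le_limsup (Eventually.of_forall hn)
      _ ≤ limsup (fun n => ∫⁻ x in A, φ k (S n x) ∂μ) atTop +
          limsup (fun n : ℕ => (∫⁻ x, g x ∂μ - ∫⁻ x, φ k x ∂μ)) atTop := om_limsup_add _ _
      _ ≤ _ := by
        rw [limsup_const]
        gcongr
        refine (simple (φ k) fun x => ne_top_of_le_ne_top (hgt x) (hφle k x)).trans ?_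
        gcongr; exact hφle k _
  have hlim2 : Tendsto (fun k => K * μ A * ∫⁻ x, g x ∂μ + (∫⁻ x, g x ∂μ - ∫⁻ x, φ k x ∂μ)) atTop
      (nhds (K * μ A * ∫⁻ x, g x ∂μ + (∫⁻ x, g x ∂μ - ∫⁻ x, g x ∂μ))) :=
    tendsto_const_nhds.add (ENNReal.Tendsto.sub tendsto_const_nhds hlim (Or.inl hgi))
  rw [tsub_self, add_zero] at hlim2
  exact ge_of_tendsto' hlim2 step

theorem om_freq (s : ℕ → ℕ) (hpos : ∀ n, 0 < s n)
    (hdense : ∀ α : ℝ, Irrational α → ∀ x ∈ Set.Ico (0 : ℝ) 1, ∀ ε > 0,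
      ∃ n : ℕ, |Int.fract ((s n : ℝ) * α) - x| < ε)
    (c : ℂ) (hc : ‖c‖ = 1) (hroot : ∀ q : ℕ, q ≠ 0 → c ^ q ≠ 1) (ε : ℝ) (hε : 0 < ε) :
    ∃ᶠ n in atTop, ‖c ^ s n - 1‖ < ε := by
  let α : ℝ := c.arg / (2 * Real.pi)
  have hpi : (0 : ℝ) < 2 * Real.pi := by positivity
  have hcα : c = Complex.exp (Complex.I * ((2 * Real.pi * α : ℝ) : ℂ)) := by
    have h1 : 2 * Real.pi * α = c.arg := by simp only [α]; field_simp
    rw [h1, mul_comm]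
    have := Complex.norm_mul_exp_arg_mul_I c
    rw [hc] at this; simpa using this.symm
  have hpow : ∀ m : ℕ, c ^ m = Complex.exp (Complex.I * ((2 * Real.pi * Int.fract (m * α) : ℝ) : ℂ)) := by
    intro m
    rw [hcα, ← Complex.exp_nat_mul, Complex.exp_eq_exp_iff_exists_int]
    refine ⟨⌊(m : ℝ) * α⌋, ?_⟩
    rw [← Int.self_sub_floor]
    push_cast
    ring
  have hfr : ∀ m : ℕ, m ≠ 0 → 0 < Int.fract ((m : ℝ) * α) := by
    intro m hm
    refine lt_of_le_of_ne (Int.fract_nonneg _) fun h => hroot m hm ?_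
    rw [hpow, ← h]; simp
  have hirr : Irrational α := by
    rintro ⟨q, hq⟩
    have := hfr q.den q.den_nz
    rw [← hq] at this
    have h2 : ((q.den : ℝ) * (q : ℝ)) = ((q.num : ℤ) : ℝ) := by
      exact_mod_cast Rat.den_mul_eq_num q
    rw [h2] at this
    simp at this
  rw [frequently_atTop]
  intro N
  have hev : ∀ᶠ d in nhdsWithin (0 : ℝ) (Ioi 0), ∀ n ∈ Finset.range N,
      d < Int.fract ((s n : ℝ) * α) := by
    rw [Filter.eventually_all_finset]
    intro n _
    exact nhdsWithin_le_nhds (eventually_lt_nhds (hfr (s n) (hpos n).ne'))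
  have hev2 : ∀ᶠ d in nhdsWithin (0 : ℝ) (Ioi 0), d < min 1 (ε / (2 * Real.pi)) :=
    nhdsWithin_le_nhds (eventually_lt_nhds (lt_min one_pos (div_pos hε hpi)))
  obtain ⟨d, ⟨hd1, hd2⟩, hd0⟩ := ((hev.and hev2).and self_mem_nhdsWithin).exists
  have hd0 : 0 < d := hd0
  have hd3 := lt_min_iff.mp hd2
  obtain ⟨n, hn⟩ := hdense α hirr (d / 2) ⟨by linarith, by linarith [hd3.1]⟩ (d / 2) (by linarith)
  have hn' := abs_lt.mp hn
  refine ⟨n, ?_, ?_⟩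
  · by_contra hlt
    have := hd1 n (Finset.mem_range.mpr (not_le.mp hlt))
    linarith
  · rw [hpow]
    refine lt_of_le_of_lt Real.norm_exp_I_mul_ofReal_sub_one_le ?_
    have h0 := Int.fract_nonneg ((s n : ℝ) * α)
    rw [Real.norm_of_nonneg (by positivity)]
    have h5 : Int.fract ((s n : ℝ) * α) < ε / (2 * Real.pi) := by linarith [hd3.2]
    rw [lt_div_iff₀ hpi] at h5
    linarith

theorem om_noeigen {X : Type*} [MeasurableSpace X] (μ : Measure X) [IsProbabilityMeasure μ]
    (T : X → X) (hT : MeasurePreserving T μ μ) (s : ℕ → ℕ) (hpos : ∀ n, 0 < s n)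
    (hdense : ∀ α : ℝ, Irrational α → ∀ x ∈ Set.Ico (0 : ℝ) 1, ∀ ε > 0,
      ∃ n : ℕ, |Int.fract ((s n : ℝ) * α) - x| < ε)
    (herg : ∀ n : ℕ, n ≠ 0 → Ergodic (T^[n]) μ) (K : ENNReal) (hKt : K ≠ ⊤)
    (hb : ∀ A B, MeasurableSet A → MeasurableSet B →
      limsup (fun n => μ (A ∩ T^[s n] ⁻¹' B)) atTop ≤ K * (μ A * μ B))
    (f : X → ℂ) (hf : Measurable f) (c : ℂ) (hc : ‖c‖ = 1)
    (hfc : ∀ᵐ x ∂μ, f (T x) = c * f x) (hf0 : ∫ x, f x ∂μ = 0) : f =ᵐ[μ] 0 := by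
  have hc0 : c ≠ 0 := by rintro rfl; simp at hc
  have hit : ∀ n : ℕ, ∀ᵐ x ∂μ, f (T^[n] x) = c ^ n * f x := by
    intro n
    induction n with
    | zero => simp
    | succ n ih =>
      filter_upwards [hT.quasiMeasurePreserving.ae ih, hfc] with x h1 h2
      rw [Function.iterate_succ_apply, h1, h2, pow_succ]; ring
  by_contra hne
  have hroot : ∀ q : ℕ, q ≠ 0 → c ^ q ≠ 1 := by
    intro q hq h1
    have h2 : f ∘ T^[q] =ᵐ[μ] f := by
      filter_upwards [hit q] with x hx
      simp [hx, h1]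
    obtain ⟨z, hz⟩ := (herg q hq).ae_eq_const_of_ae_eq_comp_ae hf.aestronglyMeasurable h2
    rw [integral_congr_ae hz] at hf0
    simp at hf0
    apply hne
    rw [hf0] at hz
    exact hz
  have hfreq := om_freq s hpos hdense c hc hroot
  obtain ⟨φ, hφ, hφc⟩ := extraction_forall_of_frequently
    (fun k : ℕ => hfreq (1 / ((k : ℝ) + 1)) (by positivity))
  have hlim : Tendsto (fun k => c ^ s (φ k)) atTop (nhds 1) := by
    rw [tendsto_iff_norm_sub_tendsto_zero]
    exact squeeze_zero (fun _ => norm_nonneg _) (fun k => (hφc k).le)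
      tendsto_one_div_add_atTop_nhds_zero_nat
  let ν := μ.map f
  have : IsProbabilityMeasure ν := Measure.isProbabilityMeasure_map hf.aemeasurable
  have hν0 : ν {0}ᶜ ≠ 0 := by
    rw [Measure.map_apply hf (measurableSet_singleton 0).compl]
    intro h
    exact hne (by rw [Filter.EventuallyEq, ae_iff]; exact h)
  obtain ⟨z, hz0, hz⟩ := exists_mem_forall_mem_nhdsWithin_pos_measure hν0
  have hz0 : z ≠ 0 := hz0
  have hball : ∀ r > 0, K⁻¹ ≤ ν (Metric.ball z r) := by
    intro r hr
    have hp : 0 < ν (Metric.ball z r) := hz _ (nhdsWithin_le_nhds (Metric.ball_mem_nhds z hr))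
    have hpt : ν (Metric.ball z r) ≠ ⊤ := measure_ne_top _ _
    have hO : MeasurableSet (f ⁻¹' Metric.ball z r) := hf measurableSet_ball
    rw [Measure.map_apply hf measurableSet_ball] at hp hpt ⊢
    set O := f ⁻¹' Metric.ball z r with hOdef
    have ht : Tendsto (fun k => μ (O ∩ T^[s (φ k)] ⁻¹' O)) atTop (nhds (μ O)) := by
      refine tendsto_measure_of_ae_tendsto_indicator_of_isFiniteMeasure atTop hO
        (fun k => hO.inter ((hT.iterate _).measurable hO)) ?_
      filter_upwards [ae_all_iff.mpr hit] with x hx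
      by_cases hxO : x ∈ O
      · have h1 : Tendsto (fun k => c ^ s (φ k) * f x) atTop (nhds (f x)) := by
          simpa using hlim.mul_const (f x)
        have h2 := h1.eventually (Metric.isOpen_ball.mem_nhds hxO)
        filter_upwards [h2] with k hk
        simp only [hxO, iff_true]
        refine ⟨hxO, ?_⟩
        simp only [hOdef, mem_preimage, hx]
        exact hk
      · exact Eventually.of_forall fun k => by simp [hxO]
    have hle : μ O ≤ K * (μ O * μ O) := by
      rw [← ht.limsup_eq]
      refine le_trans ?_ ((hb O O hO hO).trans_eq (by rw [ht.limsup_eq]))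
      exact limsup_le_limsup_of_le (u := fun n => μ (O ∩ T^[s n] ⁻¹' O)) hφ.tendsto_atTop
    have h1 : 1 ≤ K * μ O := by
      rw [← mul_assoc] at hle
      by_contra hlt
      have := ENNReal.mul_lt_mul_left hp.ne' hpt (not_le.mp hlt)
      simp only [one_mul] at this
      exact absurd hle (not_le.mpr (by simpa [mul_comm] using this))
    rw [ENNReal.inv_le_iff_le_mul]
    · exact h1
    · intro h; exact absurd h hpt
    · intro h; exact absurd h hKt
  have hatom : K⁻¹ ≤ ν {z} := by
    have h1 := tendsto_measure_biInter_gt (μ := ν) (s := fun r : ℝ => Metric.ball z r) (a := 0)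
      (fun r _ => measurableSet_ball.nullMeasurableSet)
      (fun i j _ hij => Metric.ball_subset_ball hij) ⟨1, one_pos, measure_ne_top _ _⟩
    rw [Metric.biInter_gt_ball, Metric.closedBall_zero] at h1
    refine ge_of_tendsto h1 ?_
    filter_upwards [self_mem_nhdsWithin] with r hr
    exact hball r hr
  have hEk : ∀ k : ℕ, μ (f ⁻¹' {c ^ k * z}) = ν {z} := by
    intro k
    rw [← (hT.iterate k).measure_preimage (hf (measurableSet_singleton _)).nullMeasurableSet,
      Measure.map_apply hf (measurableSet_singleton _)]
    refine measure_congr ?_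
    filter_upwards [hit k] with x hx
    refine propext ?_
    show f (T^[k] x) = c ^ k * z ↔ f x = z
    rw [hx]
    exact mul_right_inj' (pow_ne_zero _ hc0)
  have hinj : ∀ i j : ℕ, i < j → c ^ i * z ≠ c ^ j * z := by
    intro i j hij h
    have h1 := mul_right_cancel₀ hz0 h
    refine hroot (j - i) (by omega) ?_
    rw [show j = i + (j - i) by omega, pow_add] at h1
    simpa using (mul_left_cancel₀ (pow_ne_zero i hc0) (h1.symm.trans (mul_one _).symm))
  have hdisj : Pairwise (Function.onFun Disjoint (fun k : ℕ => f ⁻¹' {c ^ k * z})) := by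
    intro i j hij
    refine Disjoint.preimage f ?_
    rw [Set.disjoint_singleton]
    rcases lt_or_gt_of_ne hij with h | h
    · exact hinj i j h
    · exact (hinj j i h).symm
  have hfin := Measure.finite_const_le_meas_of_disjoint_iUnion μ (ε := K⁻¹)
    (ENNReal.inv_pos.mpr hKt) (fun k : ℕ => hf (measurableSet_singleton (c ^ k * z))) hdisj
    (measure_ne_top _ _)
  have huniv : {k : ℕ | K⁻¹ ≤ μ (f ⁻¹' {c ^ k * z})} = univ := by
    ext k; simp only [mem_ofPred_eq, mem_univ, iff_true, hEk]; exact hatom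
  rw [huniv] at hfin
  exact Set.infinite_univ hfin

theorem om_operator {X : Type*} [MeasurableSpace X] (μ : Measure X) [IsProbabilityMeasure μ]
    (T : X ≃ᵐ X) (hT : MeasurePreserving T μ μ) (s : ℕ → ℕ) (hpos : ∀ n, 0 < s n)
    (hdense : ∀ α : ℝ, Irrational α → ∀ x ∈ Set.Ico (0 : ℝ) 1, ∀ ε > 0,
      ∃ n : ℕ, |Int.fract ((s n : ℝ) * α) - x| < ε)
    (herg : ∀ n : ℕ, n ≠ 0 → Ergodic (T^[n]) μ) (K : ℝ) (hK : 0 ≤ K)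
    (hb : ∀ A B, MeasurableSet A → MeasurableSet B →
      limsup (fun n => μ (A ∩ T^[s n] ⁻¹' B)) atTop ≤ ENNReal.ofReal K * (μ A * μ B))
    (F : Ultrafilter ℕ) (hF : (F : Filter ℕ) ≤ atTop) (A B : Set X) (hA : MeasurableSet A)
    (hB : MeasurableSet B) :
    Tendsto (fun n => μ.real (A ∩ T^[s n] ⁻¹' B)) F (nhds (μ.real A * μ.real B)) := by
  let U₀ : Lp ℂ 2 μ →ₗᵢ[ℂ] Lp ℂ 2 μ := Lp.compMeasurePreservingₗᵢ ℂ T hT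
  have hTs : MeasurePreserving T.symm μ μ := hT.symm T
  have hU₀ : ∀ f, U₀ f = Lp.compMeasurePreserving T hT f := fun f => rfl
  have hsurj : Function.Surjective U₀ := by
    intro f
    refine ⟨Lp.compMeasurePreserving T.symm hTs f, ?_⟩
    rw [hU₀]
    apply Lp.ext
    refine (Lp.coeFn_compMeasurePreserving _ hT).trans ?_
    filter_upwards [hT.quasiMeasurePreserving.ae (Lp.coeFn_compMeasurePreserving f hTs)] with x hx
    exact hx.trans (by simp)
  let U : Lp ℂ 2 μ ≃ₗᵢ[ℂ] Lp ℂ 2 μ := LinearIsometryEquiv.ofSurjective U₀ hsurj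
  have hU : ∀ f, U f = Lp.compMeasurePreserving T hT f := fun f => rfl
  let V : ℕ → Lp ℂ 2 μ →L[ℂ] Lp ℂ 2 μ := fun n =>
    (Lp.compMeasurePreservingₗᵢ ℂ (T^[s n]) (hT.iterate (s n))).toContinuousLinearMap
  have hV : ∀ n f, V n f = Lp.compMeasurePreserving (T^[s n]) (hT.iterate (s n)) f :=
    fun n f => rfl
  have hVn : ∀ n f, ‖V n f‖ ≤ ‖f‖ := fun n f => by rw [hV, Lp.norm_compMeasurePreserving]
  have hVU : ∀ n f, V n (U f) = U (V n f) := by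
    intro n f
    rw [hV, hV, hU, hU, ← Lp.compMeasurePreserving_iterate, ← Function.iterate_succ_apply,
      Function.iterate_succ_apply']
  obtain ⟨P, hP⟩ := om_limit V hVn F
  have hPU : ∀ f, P (U f) = U (P f) := by
    intro g
    refine ext_inner_left ℂ fun f => ?_
    refine tendsto_nhds_unique (hP f (U g)) ?_
    have h1 := hP (U.symm f) g
    have e : ∀ h, inner ℂ (U.symm f) h = inner ℂ f (U h) := fun h => by
      rw [← U.inner_map_map, U.apply_symm_apply]
    simp only [e] at h1
    simpa only [hVU] using h1
  let ind : ∀ A : Set X, MeasurableSet A → Lp ℂ 2 μ := fun A hA =>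
    indicatorConstLp 2 hA (measure_ne_top μ A) (1 : ℂ)
  let one : Lp ℂ 2 μ := ind univ MeasurableSet.univ
  have hUone : U one = one := by
    rw [hU]; exact Lp.indicatorConstLp_compMeasurePreserving _ _ _ _
  have hVone : ∀ n, V n one = one := by
    intro n
    rw [hV]; exact Lp.indicatorConstLp_compMeasurePreserving _ _ _ _
  have hPone : P one = one := by
    refine ext_inner_left ℂ fun f => ?_
    refine tendsto_nhds_unique (hP f one) ?_
    simp only [hVone]
    exact tendsto_const_nhds
  have hII : ∀ (A B : Set X) (hA : MeasurableSet A) (hB : MeasurableSet B),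
      inner ℂ (ind A hA) (ind B hB) = (μ.real (A ∩ B) : ℂ) := fun A B hA hB =>
    L2.inner_indicatorConstLp_one_indicatorConstLp_one (𝕜 := ℂ) (μ := μ) hA hB
  have hoo : inner ℂ one one = (1 : ℂ) := by
    rw [show inner ℂ one one = _ from hII univ univ .univ .univ]; simp
  have hno : ‖one‖ = 1 := by
    have : ((‖one‖ : ℂ)) ^ 2 = 1 := by
      rw [← hoo]; exact (inner_self_eq_norm_sq_to_K (𝕜 := ℂ) one).symm
    have h2 : ‖one‖ ^ 2 = 1 := by exact_mod_cast this
    nlinarith [norm_nonneg one]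
  let Q : Lp ℂ 2 μ →L[ℂ] Lp ℂ 2 μ := P - (innerSL ℂ one).smulRight one
  have hQ : ∀ f, Q f = P f - (inner ℂ one f : ℂ) • one := fun f => by
    simp [Q]
  have hQU : ∀ f, Q (U f) = U (Q f) := by
    intro f
    rw [hQ, hQ, map_sub, map_smul, hPU, hUone]
    congr 2
    conv_lhs => rw [← hUone]
    rw [U.inner_map_map]
  have hQone : Q one = 0 := by rw [hQ, hPone, hoo, one_smul, sub_self]
  -- boundedness of the kernel
  have hPb : ∀ (A : Set X) (hA : MeasurableSet A) f,
      ‖inner ℂ (ind A hA) (P f)‖ ≤ K * ‖f‖ * μ.real A := by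
    intro A hA f
    have hg : Measurable fun x => ‖f x‖ₑ := (Lp.stronglyMeasurable f).measurable.enorm
    have hl1 : ∫⁻ x, ‖f x‖ₑ ∂μ ≤ ‖f‖ₑ := by
      rw [← eLpNorm_one_eq_lintegral_enorm, Lp.enorm_def]
      exact eLpNorm_le_eLpNorm_of_exponent_le (by norm_num) (Lp.aestronglyMeasurable f)
    have hlim := om_lint μ (fun n => T^[s n]) (fun n => hT.iterate (s n)) (ENNReal.ofReal K) A
      (fun B hB => hb A B hA hB) (fun x => ‖f x‖ₑ) hg (fun x => enorm_ne_top)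
      (ne_top_of_le_ne_top enorm_ne_top hl1)
    have hn : ∀ n, ‖inner ℂ (ind A hA) (V n f)‖ₑ ≤ ∫⁻ x in A, ‖f (T^[s n] x)‖ₑ ∂μ := by
      intro n
      rw [show inner ℂ (ind A hA) (V n f) = ∫ x in A, (V n f) x ∂μ from
        L2.inner_indicatorConstLp_one hA _ _]
      refine (enorm_integral_le_lintegral_enorm _).trans_eq ?_
      refine lintegral_congr_ae (ae_restrict_of_ae ?_)
      filter_upwards [Lp.coeFn_compMeasurePreserving f (hT.iterate (s n))] with x hx
      rw [hV, hx]; rfl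
    have h1 : ‖inner ℂ (ind A hA) (P f)‖ₑ ≤ ENNReal.ofReal K * μ A * ‖f‖ₑ := by
      have h2 := (hP (ind A hA) f).enorm
      rw [← h2.limsup_eq]
      calc _ ≤ limsup (fun n => ∫⁻ x in A, ‖f (T^[s n] x)‖ₑ ∂μ) (F : Filter ℕ) :=
            limsup_le_limsup (Eventually.of_forall hn)
        _ ≤ limsup (fun n => ∫⁻ x in A, ‖f (T^[s n] x)‖ₑ ∂μ) atTop :=
            limsup_le_limsup_of_le hF
        _ ≤ _ := hlim
        _ ≤ _ := by gcongr
    have h3 := ENNReal.toReal_mono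
      (ENNReal.mul_ne_top (ENNReal.mul_ne_top ENNReal.ofReal_ne_top (measure_ne_top μ A))
        enorm_ne_top) h1
    rw [ENNReal.toReal_mul, ENNReal.toReal_mul, ENNReal.toReal_ofReal hK, toReal_enorm,
      toReal_enorm] at h3
    refine h3.trans_eq ?_
    rw [Measure.real]; ring
  have hQb : ∀ f, ∀ᵐ x ∂μ, ‖(Q f) x‖ ≤ (2 * (K + 1)) * ‖f‖ := by
    intro f
    have := om_linfty μ (Q f) ((Lp.memLp (Q f)).integrable (by norm_num)) ((K + 1) * ‖f‖) ?_
    · filter_upwards [this] with x hx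
      linarith
    · intro A hA
      rw [← show inner ℂ (ind A hA) (Q f) = ∫ x in A, (Q f) x ∂μ from
        L2.inner_indicatorConstLp_one hA _ _]
      rw [hQ, inner_sub_right, inner_smul_right]
      have h1 : inner ℂ (ind A hA) one = (μ.real A : ℂ) := by
        rw [show inner ℂ (ind A hA) one = _ from hII A univ hA .univ, inter_univ]
      have h2 : ‖(inner ℂ one f : ℂ)‖ ≤ ‖f‖ := by
        have := norm_inner_le_norm (𝕜 := ℂ) one f
        rwa [hno, one_mul] at this
      calc _ ≤ ‖inner ℂ (ind A hA) (P f)‖ + ‖(inner ℂ one f : ℂ) * inner ℂ (ind A hA) one‖ :=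
            norm_sub_le _ _
        _ ≤ K * ‖f‖ * μ.real A + ‖f‖ * μ.real A := by
            rw [norm_mul, h1, Complex.norm_real, Real.norm_of_nonneg measureReal_nonneg]
            exact add_le_add (hPb A hA f) (mul_le_mul_of_nonneg_right h2 measureReal_nonneg)
        _ = _ := by ring
  have hQc : IsCompactOperator Q := om_compact Q ((2 * (K + 1)) ^ 2)
    (fun S hS => om_hs μ Q _ hQb S hS)
  have hQ0 : Q = 0 := by
    by_contra hne
    obtain ⟨f, hf0, hfo, c, hc⟩ := om_eigen Q hQc hne U hQU one hQone
    have hfp : ‖f‖ ≠ 0 := norm_ne_zero_iff.mpr hf0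
    have hcn : ‖c‖ = 1 := by
      have h1 : ‖U f‖ = ‖f‖ := U.norm_map f
      rw [hc, norm_smul] at h1
      exact mul_right_cancel₀ hfp (h1.trans (one_mul _).symm)
    have hintegral : ∫ x, f x ∂μ = 0 := by
      rw [← hfo, show inner ℂ one f = ∫ x in univ, f x ∂μ from
        L2.inner_indicatorConstLp_one MeasurableSet.univ _ _, Measure.restrict_univ]
    have hae : ∀ᵐ x ∂μ, f (T x) = c * f x := by
      have h1 : ((U f : Lp ℂ 2 μ) : X → ℂ) =ᵐ[μ] f ∘ T := by
        rw [hU]; exact Lp.coeFn_compMeasurePreserving f hT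
      rw [hc] at h1
      filter_upwards [h1, Lp.coeFn_smul c f] with x a b
      rw [b] at a
      exact a.symm
    have := om_noeigen μ T hT s hpos hdense herg (ENNReal.ofReal K) ENNReal.ofReal_ne_top hb
      f (Lp.stronglyMeasurable f).measurable c hcn hae hintegral
    exact hf0 ((Lp.eq_zero_iff_ae_eq_zero).mpr this)
  have hPB : P (ind B hB) = (inner ℂ one (ind B hB) : ℂ) • one := by
    have := hQ (ind B hB)
    rw [hQ0] at this
    exact (sub_eq_zero.mp this.symm)
  have hfin := hP (ind A hA) (ind B hB)
  rw [hPB, inner_smul_right] at hfin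
  have e1 : inner ℂ one (ind B hB) = (μ.real B : ℂ) := by
    rw [show inner ℂ one (ind B hB) = _ from hII univ B .univ hB, univ_inter]
  have e2 : inner ℂ (ind A hA) one = (μ.real A : ℂ) := by
    rw [show inner ℂ (ind A hA) one = _ from hII A univ hA .univ, inter_univ]
  have e3 : ∀ n, inner ℂ (ind A hA) (V n (ind B hB)) = (μ.real (A ∩ T^[s n] ⁻¹' B) : ℂ) := by
    intro n
    rw [hV]
    exact L2.inner_indicatorConstLp_one_indicatorConstLp_one (𝕜 := ℂ) (μ := μ)
      hA ((hT.iterate (s n)).measurable hB)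
  rw [e1, e2] at hfin
  simp only [e3] at hfin
  have := (Complex.continuous_re.tendsto _).comp hfin
  simpa [Function.comp_def, mul_comm] using this

/-- generalized Ornstein mixing lemma: suppose `T` is an invertible
measure-preserving transformation of a standard probability space, `(s n)` is a sequence
of positive integers such that `{s n ⬝ α}` is dense in `[0,1)` for every irrational `α`,
`T` is totally ergodic, and `limsup μ(T^{s n} A ∩ B) ≤ K μ(A)μ(B)` for some constant
`K > 1`.  Then `T` is mixing along `(s n)`. -/
theorem mixing_along_of_totallyErgodic_of_limsup_le
    {X : Type*} [MeasurableSpace X] [StandardBorelSpace X]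
    (μ : Measure X) [IsProbabilityMeasure μ] (T : X ≃ᵐ X)
    (hT : MeasurePreserving T μ μ) (s : ℕ → ℕ) (hpos : ∀ n, 0 < s n)
    (hdense : ∀ α : ℝ, Irrational α → ∀ x ∈ Set.Ico (0 : ℝ) 1, ∀ ε > 0,
      ∃ n : ℕ, |Int.fract ((s n : ℝ) * α) - x| < ε)
    (herg : ∀ n : ℕ, n ≠ 0 → Ergodic ((⇑T)^[n]) μ ∧ Ergodic ((⇑T.symm)^[n]) μ)
    (K : ℝ) (hK : 1 < K)
    (hbound : ∀ A B : Set X, MeasurableSet A → MeasurableSet B →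
      Filter.limsup (fun n : ℕ => μ ((⇑T)^[s n] '' A ∩ B)) atTop ≤
        ENNReal.ofReal K * (μ A * μ B)) :
    ∀ A B : Set X, MeasurableSet A → MeasurableSet B →
      Tendsto (fun n : ℕ => μ ((⇑T)^[s n] '' A ∩ B)) atTop (nhds (μ A * μ B)) := by
  have himg : ∀ (n : ℕ) (A B : Set X), MeasurableSet A → MeasurableSet B →
      μ ((⇑T)^[n] '' A ∩ B) = μ (A ∩ T^[n] ⁻¹' B) := by
    intro n A B hA hB
    have hinv : Function.LeftInverse (T.symm^[n]) (T^[n]) :=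
      Function.LeftInverse.iterate T.symm_apply_apply n
    have hinv' : Function.RightInverse (T.symm^[n]) (T^[n]) :=
      Function.LeftInverse.iterate T.apply_symm_apply n
    have hmi : MeasurableSet ((⇑T)^[n] '' A) := by
      rw [Set.image_eq_preimage_of_inverse hinv hinv']
      exact (T.symm.measurable.iterate n) hA
    rw [← (hT.iterate n).measure_preimage (hmi.inter hB).nullMeasurableSet, preimage_inter,
      preimage_image_eq _ hinv.injective]
  intro A B hA hB
  simp only [himg _ A B hA hB]
  rw [tendsto_iff_ultrafilter]
  intro F hF
  have h := om_operator μ T hT s hpos hdense (fun n hn => (herg n hn).1) K (by linarith)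
    (fun A B hA hB => by simpa only [himg _ A B hA hB] using hbound A B hA hB) F hF A B hA hB
  have hfin : μ A * μ B ≠ ⊤ := ENNReal.mul_ne_top (measure_ne_top _ _) (measure_ne_top _ _)
  rw [← ENNReal.tendsto_toReal_iff (fun n => measure_ne_top _ _) hfin, ENNReal.toReal_mul]
  exact h
end
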